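/- Let A, C, σ, Ra be strictly positive real parameters. Then the Glukhovsky–Dolzhansky system has no nonconstant rational first integral; that is, if f, g ∈ ℝ[x,y,z] are nonzero coprime polynomials satisfying the identity X(f)·g = f·X(g) (which expresses that the rational function f/g is a first integral of the system), then both f and g are constant polynomials. -/

import Mathlib

open MvPolynomial

/-- The derivation associated with the Glukhovsky–Dolzhansky system
`ẋ = A y z + C z − σ x, ẏ = −x z + Ra − y, ż = −z + x y`,
acting on `ℝ[x,y,z]` (variables `X 0 = x`, `X 1 = y`, `X 2 = z`). -/
noncomputable def gdDeriv (A C σ Ra : ℝ) (f : MvPolynomial (Fin 3) ℝ) :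
    MvPolynomial (Fin 3) ℝ :=
  (MvPolynomial.C A * X 1 * X 2 + MvPolynomial.C C * X 2 - MvPolynomial.C σ * X 0) *
      pderiv (0 : Fin 3) f
    + (-(X 0 * X 2) + MvPolynomial.C Ra - X 1) * pderiv (1 : Fin 3) f
    + (-X 2 + X 0 * X 1) * pderiv (2 : Fin 3) f

/-!
If `f / g` is a first integral in lowest terms, then `f` and `g` are Darboux polynomials with a
common cofactor `K₁ + K₀`, of degree at most one. Darboux polynomials with this cofactor form a
vector space, so it suffices to show that the leading homogeneous parts `f₀` and `g₀` of any two of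
them are proportional.

Let `D₂`, `D₁`, `D₀` be the parts of the vector field with quadratic, linear and constant
coefficients. Each sign change of a variable anticommutes with `D₂`, and the three of them add up to
the identity on linear forms, so the product `Q` of the three images of `g₀` satisfies
`D₂ Q = -K₁ Q`. Hence `Q f₀` and `Q g₀` are annihilated by `D₂`; as such, they are polynomials `a`
and `b` in `u = x² + A y²` and `v = y² + z²`. Expanding `f / g` by degree, the next two terms solve
equations of the form `D₂ E = …` whose right-hand sides are explicit in `a` and `b`. Only particular
right-hand sides lie in the image of `D₂`, and this forces both partial derivatives of `a / b` to
vanish.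
-/

namespace GlukhovskyDolzhansky

section Derivations

variable {ι R S : Type*} [CommRing R] [CommRing S] [Algebra R S]

theorem derivation_map_eq_sum_pderiv [Fintype ι] (D : Derivation R S S)
    (ψ : MvPolynomial ι R →ₐ[R] S) (f : MvPolynomial ι R) :
    D (ψ f) = ∑ i, ψ (pderiv i f) * D (ψ (X i)) := by
  classical
  induction f using MvPolynomial.induction_on with
  | C a => simp [← algebraMap_eq]
  | add p q hp hq => simp only [map_add, hp, hq, add_mul, Finset.sum_add_distrib]
  | mul_X p i hp =>
    simp only [map_mul, Derivation.leibniz, smul_eq_mul, hp, pderiv_X, Pi.single_apply, mul_ite,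
      mul_one, mul_zero, apply_ite ψ, map_add, map_zero, add_mul, ite_mul, zero_mul,
      Finset.sum_add_distrib, Finset.sum_ite_eq, Finset.mem_univ, if_true, Finset.mul_sum,
      mul_assoc]

theorem derivation_comp_eq_mul_comp {D : Derivation R (MvPolynomial ι R) (MvPolynomial ι R)}
    {ψ : MvPolynomial ι R →ₐ[R] MvPolynomial ι R} {c : MvPolynomial ι R}
    (hX : ∀ i, D (ψ (X i)) = c * ψ (D (X i))) (f : MvPolynomial ι R) :
    D (ψ f) = c * ψ (D f) := by
  induction f using MvPolynomial.induction_on with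
  | C a => simp [← algebraMap_eq]
  | add p q hp hq => simp only [map_add, hp, hq, mul_add]
  | mul_X p i hp =>
    simp only [map_mul, map_add, Derivation.leibniz, smul_eq_mul, hp, hX]
    ring

theorem derivation_eval₂_of_forall_eq_zero {T : Type*} [CommRing T] (D : Derivation R S S)
    {ψ : T →+* S} (hψ : ∀ b, D (ψ b) = 0) (s : S) (H : Polynomial T) :
    D (H.eval₂ ψ s) = H.derivative.eval₂ ψ s * D s := by
  induction H using Polynomial.induction_on' with
  | add p q hp hq => simp only [Polynomial.eval₂_add, map_add, hp, hq, add_mul]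
  | monomial n b =>
    simp [Polynomial.eval₂_monomial, Polynomial.derivative_monomial, hψ, Derivation.leibniz_pow,
      mul_assoc]

/-- The numerator `b D(a) - a D(b)` of `D (a / b)`. -/
def derivWronskian (D : Derivation R S S) (a b : S) : S :=
  b * D a - a * D b

theorem derivWronskian_mul_mul (D : Derivation R S S) (c a b : S) :
    derivWronskian D (c * a) (c * b) = c ^ 2 * derivWronskian D a b := by
  simp only [derivWronskian, Derivation.leibniz, smul_eq_mul]
  ring

theorem derivWronskian_map_eq_sum_pderiv [Fintype ι] (D : Derivation R S S)
    (ψ : MvPolynomial ι R →ₐ[R] S) (a b : MvPolynomial ι R) :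
    derivWronskian D (ψ a) (ψ b) = ∑ i, ψ (derivWronskian (pderiv i) a b) * D (ψ (X i)) := by
  simp only [derivWronskian, derivation_map_eq_sum_pderiv D ψ a, derivation_map_eq_sum_pderiv D ψ b,
    Finset.mul_sum, map_sub, map_mul, sub_mul, Finset.sum_sub_distrib, mul_assoc]

-- Up to a factor `b ^ 3`, this is `D (E (a / b)) = ⁅D, E⁆ (a / b) + E (D (a / b))`.
theorem derivWronskian_commutator (D E : Derivation R S S) (a b : S) :
    b * D (derivWronskian E a b) - 2 * derivWronskian E a b * D b =
      b * derivWronskian ⁅D, E⁆ a b + b * E (derivWronskian D a b)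
        - 2 * derivWronskian D a b * E b := by
  simp only [derivWronskian, Derivation.commutator_apply, Derivation.leibniz, map_sub, smul_eq_mul]
  ring

theorem dvd_right_of_derivWronskian_eq_zero {D : Derivation R S S} {a b : S} [DecompositionMonoid S]
    (hab : IsRelPrime a b) (h : derivWronskian D a b = 0) : b ∣ D b :=
  hab.symm.dvd_of_dvd_mul_left ⟨D a, (sub_eq_zero.mp h).symm⟩

end Derivations

section HomogeneousPart

variable {ι R : Type*} [CommRing R]

/-- The homogeneous part of degree `j` of a polynomial. The degree is an integer, and the parts of
negative degree vanish, so that degrees can be shifted down freely. -/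
noncomputable def homogeneousPart (j : ℤ) : MvPolynomial ι R →ₗ[R] MvPolynomial ι R :=
  if 0 ≤ j then homogeneousComponent j.toNat else 0

theorem coeff_homogeneousPart (j : ℤ) (f : MvPolynomial ι R) (d : ι →₀ ℕ) :
    coeff d (homogeneousPart j f) = if (d.degree : ℤ) = j then coeff d f else 0 := by
  unfold homogeneousPart
  split_ifs with hj hd hd
  · rw [coeff_homogeneousComponent, if_pos (by lia)]
  · rw [coeff_homogeneousComponent, if_neg (by lia)]
  · lia
  · simp

theorem homogeneousPart_natCast (n : ℕ) (f : MvPolynomial ι R) :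
    homogeneousPart n f = homogeneousComponent n f := by
  simp [homogeneousPart]

theorem homogeneousPart_eq_zero {j : ℤ} {f : MvPolynomial ι R} (h : (f.totalDegree : ℤ) < j) :
    homogeneousPart j f = 0 := by
  lift j to ℕ using by lia
  rw [homogeneousPart_natCast, homogeneousComponent_eq_zero _ _ (by exact_mod_cast h)]

theorem homogeneousPart_totalDegree_ne_zero {f : MvPolynomial ι R} (hf : f ≠ 0) :
    homogeneousPart f.totalDegree f ≠ 0 := by
  obtain ⟨d, hd, hdeg⟩ := Finset.exists_mem_eq_sup f.support (support_nonempty.mpr hf)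
    Finsupp.degree
  intro h
  have hcoeff := congrArg (coeff d) h
  rw [coeff_homogeneousPart, if_pos (by exact_mod_cast hdeg.symm), coeff_zero] at hcoeff
  exact mem_support_iff.mp hd hcoeff

theorem eq_of_homogeneousPart_eq_C_mul {i j : ℤ} {f g : MvPolynomial ι R} {t : R}
    (hf : homogeneousPart i f ≠ 0) (h : homogeneousPart i f = C t * homogeneousPart j g) :
    i = j := by
  obtain ⟨d, hd⟩ := ne_zero_iff.mp hf
  have hi : (d.degree : ℤ) = i := by
    by_contra hne
    exact hd (by rw [coeff_homogeneousPart, if_neg hne])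
  rw [h, coeff_C_mul, coeff_homogeneousPart] at hd
  by_contra hne
  exact hd (by rw [if_neg (by lia), mul_zero])

theorem homogeneousPart_C (j : ℤ) (a : R) :
    homogeneousPart j (C a : MvPolynomial ι R) = C (if j = 0 then a else 0) := by
  classical
  ext d
  rcases eq_or_ne d 0 with rfl | hd
  · simp [coeff_homogeneousPart, eq_comm]
  · simp [coeff_homogeneousPart, coeff_C, hd.symm]

theorem homogeneousPart_mul {m : ℕ} {h : MvPolynomial ι R} (hh : h.IsHomogeneous m) (j : ℤ)
    (f : MvPolynomial ι R) :
    homogeneousPart j (h * f) = h * homogeneousPart (j - m) f := by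
  classical
  ext d
  rw [coeff_homogeneousPart, coeff_mul, coeff_mul, ← Finset.sum_const_zero, ← Finset.sum_ite_irrel]
  refine Finset.sum_congr rfl fun x hx => ?_
  have hdeg : d.degree = x.1.degree + x.2.degree := by
    rw [← map_add, Finset.HasAntidiagonal.mem_antidiagonal.mp hx]
  by_cases hm : x.1.degree = m
  · rw [coeff_homogeneousPart, mul_ite, mul_zero]
    exact if_congr (by lia) rfl rfl
  · simp [hh.coeff_eq_zero hm]

theorem homogeneousPart_derivation {D : Derivation R (MvPolynomial ι R) (MvPolynomial ι R)} {m : ℕ}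
    (hD : ∀ i, (D (X i)).IsHomogeneous m) (j : ℤ) (f : MvPolynomial ι R) :
    homogeneousPart j (D f) = D (homogeneousPart (j + 1 - m) f) := by
  induction f using MvPolynomial.induction_on generalizing j with
  | C a => simp only [homogeneousPart_C, derivation_C, map_zero]
  | add p q hp hq => simp only [map_add, hp, hq]
  | mul_X p i hp =>
    rw [mul_comm p, homogeneousPart_mul (isHomogeneous_X R i), Derivation.leibniz,
      Derivation.leibniz, map_add]
    simp only [smul_eq_mul]
    rw [mul_comm p, homogeneousPart_mul (hD i), homogeneousPart_mul (isHomogeneous_X R i), hp]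
    grind

theorem totalDegree_derivation_add_one_le
    {D : Derivation R (MvPolynomial ι R) (MvPolynomial ι R)} {m : ℕ}
    (hD : ∀ i, (D (X i)).IsHomogeneous m) {f : MvPolynomial ι R} (hf : D f ≠ 0) :
    (D f).totalDegree + 1 ≤ f.totalDegree + m := by
  by_contra! hlt
  apply homogeneousPart_totalDegree_ne_zero hf
  rw [homogeneousPart_derivation hD, homogeneousPart_eq_zero (by lia), map_zero]

end HomogeneousPart

section ConstantRatio

variable {ι K : Type*} [Field K] [CharZero K]

theorem eq_C_of_pderiv_eq_zero {b : MvPolynomial ι K} (h : ∀ i, pderiv i b = 0) :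
    b = C (coeff 0 b) := by
  apply MvPolynomial.coe_injective
  refine MvPowerSeries.pderiv.ext (fun i => ?_) ?_
  · rw [MvPowerSeries.pderiv_coe, MvPowerSeries.pderiv_coe, h, pderiv_C]
  · simp only [← MvPowerSeries.coeff_zero_eq_constantCoeff_apply, coeff_coe,
      coeff_zero_C]

theorem pderiv_eq_zero_of_dvd {R : Type*} [CommRing R] [IsDomain R] {b : MvPolynomial ι R} {i : ι}
    (h : b ∣ pderiv i b) : pderiv i b = 0 := by
  classical
  by_contra hne
  have hX (j : ι) : (pderiv i (X j : MvPolynomial ι R)).IsHomogeneous 0 := by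
    rw [pderiv_X, Pi.single_apply]
    split_ifs
    exacts [isHomogeneous_one ι R, isHomogeneous_zero ι R 0]
  have hlt := totalDegree_derivation_add_one_le hX hne
  have hle := totalDegree_le_of_dvd_of_isDomain h hne
  lia

theorem exists_eq_C_mul_of_derivWronskian_pderiv_eq_zero {a b : MvPolynomial ι K} (hb : b ≠ 0)
    (h : ∀ i, derivWronskian (pderiv i) a b = 0) : ∃ t : K, a = C t * b := by
  classical
  obtain ⟨a', b', d, hrel, rfl, rfl⟩ := UniqueFactorizationMonoid.exists_reduced_factors' a b hb
  have hd : d ≠ 0 := left_ne_zero_of_mul hb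
  have hW (i : ι) : derivWronskian (pderiv i) a' b' = 0 := by
    simpa [derivWronskian_mul_mul, hd] using h i
  have hb' : b' = C (coeff 0 b') := eq_C_of_pderiv_eq_zero fun i =>
    pderiv_eq_zero_of_dvd (dvd_right_of_derivWronskian_eq_zero hrel (hW i))
  have hc : coeff 0 b' ≠ 0 := fun hc => right_ne_zero_of_mul hb (by rw [hb', hc, C_0])
  have ha' : a' = C (coeff 0 a') := eq_C_of_pderiv_eq_zero fun i => by
    have := hW i
    rw [derivWronskian, hb', pderiv_C, mul_zero, sub_zero] at this
    exact (mul_eq_zero.mp this).resolve_left (C_ne_zero.mpr hc)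
  refine ⟨coeff 0 a' / coeff 0 b', ?_⟩
  rw [ha', hb', coeff_C, coeff_C, if_pos rfl, if_pos rfl, mul_left_comm, ← C_mul,
    div_mul_cancel₀ _ hc]

end ConstantRatio

section SqrtTwistedDeriv

variable {R : Type*} [CommRing R]

/-- The operator `H ↦ M' H + 2 M H'`, which is `H ↦ 2 √M (√M H)'` without square roots. -/
noncomputable def sqrtTwistedDeriv (M H : Polynomial R) : Polynomial R :=
  M.derivative * H + 2 * M * H.derivative

theorem mul_sqrtTwistedDeriv (M H : Polynomial R) :
    H * sqrtTwistedDeriv M H = (M * H ^ 2).derivative := by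
  rw [sqrtTwistedDeriv, Polynomial.derivative_mul, Polynomial.derivative_sq, Polynomial.C_ofNat]
  ring

theorem eq_zero_of_natDegree_sqrtTwistedDeriv_lt [IsDomain R] [CharZero R] {M H : Polynomial R}
    (h : (sqrtTwistedDeriv M H).natDegree + 1 < M.natDegree) : H = 0 := by
  by_contra hH
  have hM : M ≠ 0 := by rintro rfl; simp at h
  have hdeg := congrArg Polynomial.natDegree (mul_sqrtTwistedDeriv M H)
  rw [Polynomial.natDegree_derivative, Polynomial.natDegree_mul hM (pow_ne_zero 2 hH),
    Polynomial.natDegree_pow] at hdeg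
  have hle := Polynomial.natDegree_mul_le (p := H) (q := sqrtTwistedDeriv M H)
  lia

end SqrtTwistedDeriv

section SignFlip

variable {ι R : Type*} [CommRing R]

/-- The automorphism of a polynomial ring that changes the sign of the variable `X i`. -/
noncomputable def signFlip [DecidableEq ι] (i : ι) : MvPolynomial ι R →ₐ[R] MvPolynomial ι R :=
  aeval (Function.update X i (-X i))

variable [DecidableEq ι]

@[simp]
theorem signFlip_X (i j : ι) :
    signFlip i (X j : MvPolynomial ι R) = if j = i then -X j else X j := by
  rcases eq_or_ne j i with rfl | hji <;> simp [signFlip, *]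

theorem signFlip_signFlip (i : ι) (f : MvPolynomial ι R) : signFlip i (signFlip i f) = f := by
  have h : (signFlip i).comp (signFlip i) = AlgHom.id R (MvPolynomial ι R) := by
    ext j : 1
    rcases eq_or_ne j i with rfl | hji <;> simp [*]
  exact congrArg (fun ψ => ψ f) h

theorem signFlip_ne_zero (i : ι) {f : MvPolynomial ι R} (hf : f ≠ 0) : signFlip i f ≠ 0 :=
  fun h => hf (by rw [← signFlip_signFlip i f, h, map_zero])

theorem eq_zero_of_add_X_mul_eq_zero [IsDomain R] [CharZero R] {i : ι} {p q : MvPolynomial ι R}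
    (hp : signFlip i p = p) (hq : signFlip i q = q) (h : p + X i * q = 0) : p = 0 ∧ q = 0 := by
  have hflip : p - X i * q = 0 := by
    simpa [hp, hq, sub_eq_add_neg] using congrArg (signFlip i) h
  have hp0 : p = 0 := by
    simpa using (by linear_combination h + hflip : 2 * p = 0)
  rw [hp0, zero_add] at h
  exact ⟨hp0, (mul_eq_zero.mp h).resolve_left (X_ne_zero i)⟩

end SignFlip

section QuadraticPart

variable {R : Type*} [CommRing R]

/-- The part of the Glukhovsky–Dolzhansky vector field with quadratic coefficients. -/
noncomputable def quadraticPart (A : R) :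
    Derivation R (MvPolynomial (Fin 3) R) (MvPolynomial (Fin 3) R) :=
  mkDerivation R ![C A * X 1 * X 2, -(X 0 * X 2), X 0 * X 1]

@[simp]
theorem quadraticPart_X (A : R) (i : Fin 3) :
    quadraticPart A (X i) = ![C A * X 1 * X 2, -(X 0 * X 2), X 0 * X 1] i :=
  mkDerivation_X ..

/-- The embedding of `R[u, v]` into `R[x, y, z]` that sends `u` and `v` to the first integrals
`x² + A y²` and `y² + z²` of the quadratic part. -/
noncomputable def invariantHom (A : R) : MvPolynomial (Fin 2) R →ₐ[R] MvPolynomial (Fin 3) R :=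
  aeval ![X 0 ^ 2 + C A * X 1 ^ 2, X 1 ^ 2 + X 2 ^ 2]

@[simp]
theorem invariantHom_X (A : R) (i : Fin 2) :
    invariantHom A (X i) = ![X 0 ^ 2 + C A * X 1 ^ 2, X 1 ^ 2 + X 2 ^ 2] i :=
  aeval_X ..

@[simp]
theorem invariantHom_C (A t : R) : invariantHom A (C t) = C t :=
  aeval_C ..

theorem quadraticPart_invariantHom (A : R) (b : MvPolynomial (Fin 2) R) :
    quadraticPart A (invariantHom A b) = 0 := by
  rw [derivation_map_eq_sum_pderiv, Fin.sum_univ_two]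
  simp only [invariantHom_X, Matrix.cons_val, map_add, Derivation.leibniz, Derivation.leibniz_pow,
    derivation_C, quadraticPart_X, smul_eq_mul, nsmul_eq_mul, Nat.cast_ofNat]
  ring

/-- The embedding of `R[u, v][y]` into `R[x, y, z]` that extends `invariantHom` by `y ↦ y`. Its
image is `R[x², y, z²]`. -/
noncomputable def evenHom (A : R) :
    Polynomial (MvPolynomial (Fin 2) R) →+* MvPolynomial (Fin 3) R :=
  Polynomial.eval₂RingHom (invariantHom A) (X 1)

@[simp]
theorem evenHom_C (A : R) (b : MvPolynomial (Fin 2) R) :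
    evenHom A (Polynomial.C b) = invariantHom A b :=
  Polynomial.eval₂_C ..

@[simp]
theorem evenHom_X (A : R) : evenHom A Polynomial.X = X 1 :=
  Polynomial.eval₂_X ..

theorem quadraticPart_evenHom (A : R) (H : Polynomial (MvPolynomial (Fin 2) R)) :
    quadraticPart A (evenHom A H) = -(X 0 * X 2) * evenHom A H.derivative := by
  have h := derivation_eval₂_of_forall_eq_zero (quadraticPart A)
    (ψ := (invariantHom A).toRingHom) (quadraticPart_invariantHom A) (X 1) H
  rw [quadraticPart_X, mul_comm] at h
  exact h

theorem signFlip_evenHom (A : R) {i : Fin 3} (hi : i ≠ 1)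
    (H : Polynomial (MvPolynomial (Fin 2) R)) : signFlip i (evenHom A H) = evenHom A H := by
  suffices h : (signFlip i).toRingHom.comp (evenHom A) = evenHom A from
    RingHom.congr_fun h H
  refine Polynomial.ringHom_ext' (MvPolynomial.ringHom_ext (fun t => ?_) fun j => ?_) ?_
  · simp
  · fin_cases i <;> fin_cases j <;> simp at hi ⊢
  · simp [hi.symm]

-- Halving the exponents of `x` and `z` turns `evenHom` into an invertible affine substitution.
theorem evenHom_injective (A : R) : Function.Injective (evenHom A) := by
  let affine : Polynomial (MvPolynomial (Fin 2) R) →+* MvPolynomial (Fin 3) R :=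
    Polynomial.eval₂RingHom (aeval ![X 0 + C A * X 1 ^ 2, X 1 ^ 2 + X 2]).toRingHom (X 1)
  let affineInv : MvPolynomial (Fin 3) R →ₐ[R] Polynomial (MvPolynomial (Fin 2) R) :=
    aeval ![Polynomial.C (X 0) - Polynomial.C (C A) * Polynomial.X ^ 2, Polynomial.X,
      Polynomial.C (X 1) - Polynomial.X ^ 2]
  let squareY : MvPolynomial (Fin 3) R →ₐ[R] MvPolynomial (Fin 3) R := aeval ![X 0, X 1 ^ 2, X 2]
  have hinv : affineInv.toRingHom.comp affine = RingHom.id _ := by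
    refine Polynomial.ringHom_ext' (MvPolynomial.ringHom_ext (fun t => ?_) fun j => ?_) ?_
    · simp [affine]
    · fin_cases j <;> simp [affine, affineInv]
    · simp [affine, affineInv]
  have hexpand : squareY.toRingHom.comp (evenHom A) =
      (expand 2).toRingHom.comp affine := by
    refine Polynomial.ringHom_ext' (MvPolynomial.ringHom_ext (fun t => ?_) fun j => ?_) ?_
    · simp [affine]
    · fin_cases j <;> simp [affine, squareY]
    · simp [affine, squareY]
  have haffine : Function.Injective affine :=
    Function.LeftInverse.injective (g := affineInv) (RingHom.congr_fun hinv)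
  refine Function.Injective.of_comp (f := squareY) ?_
  have hcomp : squareY ∘ evenHom A = expand 2 ∘ affine := congrArg DFunLike.coe hexpand
  exact hcomp ▸ (expand_injective two_pos).comp haffine

/-- The expression of `x²` as a polynomial in `u = x² + A y²` and `y`. -/
noncomputable def xSq (A : R) : Polynomial (MvPolynomial (Fin 2) R) :=
  Polynomial.C (X 0) - Polynomial.C (C A) * Polynomial.X ^ 2

/-- The expression of `z²` as a polynomial in `v = y² + z²` and `y`. -/
noncomputable def zSq : Polynomial (MvPolynomial (Fin 2) R) :=
  Polynomial.C (X 1) - Polynomial.X ^ 2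

@[simp]
theorem evenHom_xSq (A : R) : evenHom A (xSq A) = X 0 ^ 2 := by
  simp [xSq]

@[simp]
theorem evenHom_zSq (A : R) : evenHom A zSq = X 2 ^ 2 := by
  simp [zSq]

theorem natDegree_xSq [IsDomain R] {A : R} (hA : A ≠ 0) : (xSq A).natDegree = 2 := by
  rw [xSq, Polynomial.natDegree_sub_eq_right_of_natDegree_lt] <;> simp [hA]

theorem natDegree_zSq [IsDomain R] : (zSq : Polynomial (MvPolynomial (Fin 2) R)).natDegree = 2 := by
  rw [zSq, Polynomial.natDegree_sub_eq_right_of_natDegree_lt] <;> simp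

theorem natDegree_xSq_mul_zSq [IsDomain R] {A : R} (hA : A ≠ 0) :
    (xSq A * zSq).natDegree = 4 := by
  rw [Polynomial.natDegree_mul, natDegree_xSq hA, natDegree_zSq]
  · exact fun h => by simpa [h] using natDegree_xSq hA
  · exact fun h => by simpa [h] using natDegree_zSq (R := R)

/-- The polynomial with coordinates `h₁, hx, hz, hxz` in the basis `1, x, z, xz` of `R[x, y, z]`
over the image of `evenHom`. -/
noncomputable def ofParityParts (A : R) (h₁ hx hz hxz : Polynomial (MvPolynomial (Fin 2) R)) :
    MvPolynomial (Fin 3) R :=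
  evenHom A h₁ + X 0 * evenHom A hx + X 2 * (evenHom A hz + X 0 * evenHom A hxz)

theorem exists_eq_ofParityParts (A : R) (f : MvPolynomial (Fin 3) R) :
    ∃ h₁ hx hz hxz, f = ofParityParts A h₁ hx hz hxz := by
  induction f using MvPolynomial.induction_on with
  | C t => exact ⟨Polynomial.C (C t), 0, 0, 0, by simp [ofParityParts]⟩
  | add p q hp hq =>
    obtain ⟨h₁, hx, hz, hxz, rfl⟩ := hp
    obtain ⟨g₁, gx, gz, gxz, rfl⟩ := hq
    refine ⟨h₁ + g₁, hx + gx, hz + gz, hxz + gxz, ?_⟩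
    simp only [ofParityParts, map_add]
    ring
  | mul_X p i hp =>
    obtain ⟨h₁, hx, hz, hxz, rfl⟩ := hp
    fin_cases i
    · refine ⟨xSq A * hx, h₁, xSq A * hxz, hz, ?_⟩
      simp only [ofParityParts, map_mul, evenHom_xSq, Fin.zero_eta]
      ring
    · refine ⟨Polynomial.X * h₁, Polynomial.X * hx, Polynomial.X * hz, Polynomial.X * hxz, ?_⟩
      simp only [ofParityParts, map_mul, evenHom_X, Fin.mk_one]
      ring
    · refine ⟨zSq * hz, zSq * hxz, h₁, hx, ?_⟩
      simp only [ofParityParts, map_mul, evenHom_zSq, Fin.reduceFinMk]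
      ring

theorem eq_zero_of_ofParityParts_eq_zero [IsDomain R] [CharZero R] {A : R}
    {h₁ hx hz hxz : Polynomial (MvPolynomial (Fin 2) R)} (h : ofParityParts A h₁ hx hz hxz = 0) :
    h₁ = 0 ∧ hx = 0 ∧ hz = 0 ∧ hxz = 0 := by
  have hsplit {p q : Polynomial (MvPolynomial (Fin 2) R)}
      (hpq : evenHom A p + X 0 * evenHom A q = 0) : p = 0 ∧ q = 0 := by
    have hflip := signFlip_evenHom A (i := 0) (by decide)
    simpa only [map_eq_zero_iff _ (evenHom_injective A)] using
      eq_zero_of_add_X_mul_eq_zero (hflip p) (hflip q) hpq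
  have hflip (p q : Polynomial (MvPolynomial (Fin 2) R)) :
      signFlip 2 (evenHom A p + X 0 * evenHom A q) = evenHom A p + X 0 * evenHom A q := by
    simp [signFlip_evenHom A (i := 2) (by decide)]
  obtain ⟨h₁x, hzxz⟩ := eq_zero_of_add_X_mul_eq_zero (hflip h₁ hx) (hflip hz hxz) h
  exact ⟨(hsplit h₁x).1, (hsplit h₁x).2, (hsplit hzxz).1, (hsplit hzxz).2⟩

theorem two_mul_quadraticPart_ofParityParts (A : R)
    (h₁ hx hz hxz : Polynomial (MvPolynomial (Fin 2) R)) :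
    2 * quadraticPart A (ofParityParts A h₁ hx hz hxz) =
      ofParityParts A (-sqrtTwistedDeriv (xSq A * zSq) hxz) (-sqrtTwistedDeriv zSq hz)
        (-sqrtTwistedDeriv (xSq A) hx) (-2 * h₁.derivative) := by
  have hx' : evenHom A (xSq A).derivative = -2 * C A * X 1 := by
    simp only [xSq, Polynomial.derivative_C, Polynomial.derivative_mul, Polynomial.derivative_X_sq,
      map_sub, map_add, map_mul, map_zero, evenHom_C, evenHom_X, invariantHom_C, map_ofNat]
    ring
  have hz' : evenHom A zSq.derivative = -2 * X 1 := by
    simpa [zSq] using one_add_one_eq_two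
  simp only [ofParityParts, sqrtTwistedDeriv, map_add, map_mul, map_neg, map_ofNat,
    Derivation.leibniz, smul_eq_mul, quadraticPart_evenHom, quadraticPart_X, Matrix.cons_val,
    Polynomial.derivative_mul, hx', hz', evenHom_xSq, evenHom_zSq]
  ring

variable [IsDomain R] [CharZero R] {A : R}

theorem exists_eq_invariantHom_of_quadraticPart_eq_zero (hA : A ≠ 0) {f : MvPolynomial (Fin 3) R}
    (hf : quadraticPart A f = 0) : ∃ b, f = invariantHom A b := by
  obtain ⟨h₁, hx, hz, hxz, rfl⟩ := exists_eq_ofParityParts A f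
  have h := two_mul_quadraticPart_ofParityParts A h₁ hx hz hxz
  rw [hf, mul_zero] at h
  obtain ⟨hOpxz, hOpz, hOpx, hd⟩ := eq_zero_of_ofParityParts_eq_zero h.symm
  rw [neg_eq_zero] at hOpxz hOpz hOpx
  have hxz0 : hxz = 0 := eq_zero_of_natDegree_sqrtTwistedDeriv_lt (M := xSq A * zSq) <| by
    simp [hOpxz, natDegree_xSq_mul_zSq hA]
  have hz0 : hz = 0 := eq_zero_of_natDegree_sqrtTwistedDeriv_lt (M := zSq) <| by
    simp [hOpz, natDegree_zSq]
  have hx0 : hx = 0 := eq_zero_of_natDegree_sqrtTwistedDeriv_lt (M := xSq A) <| by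
    simp [hOpx, natDegree_xSq hA]
  have hd0 : h₁.derivative = 0 := by simpa using hd
  refine ⟨h₁.coeff 0, ?_⟩
  rw [Polynomial.eq_C_of_derivative_eq_zero hd0]
  simp [ofParityParts, hx0, hz0, hxz0]

-- The even part of `quadraticPart A F` is a nonzero multiple of `sqrtTwistedDeriv (xSq A * zSq) H`,
-- whose degree in `y` is at least `3` unless it vanishes.
theorem eq_zero_of_quadraticPart_eq (hA : A ≠ 0) {F : MvPolynomial (Fin 3) R}
    {e₀ e₁ e₂ : MvPolynomial (Fin 2) R} {H : Polynomial (MvPolynomial (Fin 2) R)}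
    (hF : quadraticPart A F = invariantHom A e₀ + invariantHom A e₁ * X 1
      + invariantHom A e₂ * X 1 ^ 2 + X 0 * X 2 * evenHom A H) : e₀ = 0 ∧ e₁ = 0 ∧ e₂ = 0 := by
  obtain ⟨h₁, hx, hz, hxz, rfl⟩ := exists_eq_ofParityParts A F
  set E : Polynomial (MvPolynomial (Fin 2) R) := Polynomial.C e₂ * Polynomial.X ^ 2
    + Polynomial.C e₁ * Polynomial.X + Polynomial.C e₀ with hE
  have h := two_mul_quadraticPart_ofParityParts A h₁ hx hz hxz
  rw [hF] at h
  have heven : -sqrtTwistedDeriv (xSq A * zSq) hxz - 2 * E = 0 := by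
    refine (eq_zero_of_ofParityParts_eq_zero (A := A) (hx := -sqrtTwistedDeriv zSq hz)
      (hz := -sqrtTwistedDeriv (xSq A) hx) (hxz := -2 * h₁.derivative - 2 * H) ?_).1
    simp only [ofParityParts, map_sub, map_mul, map_ofNat, hE, map_add, evenHom_C, evenHom_X,
      map_pow] at h ⊢
    linear_combination -h
  have hxz0 : hxz = 0 := eq_zero_of_natDegree_sqrtTwistedDeriv_lt (M := xSq A * zSq) <| by
    rw [show sqrtTwistedDeriv (xSq A * zSq) hxz = Polynomial.C (-2) * E by
      rw [map_neg, map_ofNat]; linear_combination -heven]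
    have hle : (Polynomial.C (-2) * E).natDegree ≤ 2 :=
      (Polynomial.natDegree_C_mul_le _ _).trans Polynomial.natDegree_quadratic_le
    rw [natDegree_xSq_mul_zSq hA]
    lia
  have hE0 : E = 0 := by simpa [hxz0, sqrtTwistedDeriv] using heven
  exact ⟨by simpa [hE] using congrArg (Polynomial.coeff · 0) hE0,
    by simpa [hE, Polynomial.coeff_X, Polynomial.coeff_C] using congrArg (Polynomial.coeff · 1) hE0,
    by simpa [hE, Polynomial.coeff_X, Polynomial.coeff_C] using congrArg (Polynomial.coeff · 2) hE0⟩

end QuadraticPart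

section LowerOrderParts

variable {R : Type*} [CommRing R]

/-- The part of the Glukhovsky–Dolzhansky vector field with linear coefficients. -/
noncomputable def linearPart (c σ : R) :
    Derivation R (MvPolynomial (Fin 3) R) (MvPolynomial (Fin 3) R) :=
  mkDerivation R ![C c * X 2 - C σ * X 0, -X 1, -X 2]

@[simp]
theorem linearPart_X (c σ : R) (i : Fin 3) :
    linearPart c σ (X i) = ![C c * X 2 - C σ * X 0, -X 1, -X 2] i :=
  mkDerivation_X ..

/-- The part of the Glukhovsky–Dolzhansky vector field with constant coefficients. -/
noncomputable def constantPart (r : R) :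
    Derivation R (MvPolynomial (Fin 3) R) (MvPolynomial (Fin 3) R) :=
  mkDerivation R ![0, C r, 0]

@[simp]
theorem constantPart_X (r : R) (i : Fin 3) : constantPart r (X i) = ![0, C r, 0] i :=
  mkDerivation_X ..

/-- The Euler derivation `∑ i, X i * ∂ / ∂ X i`. -/
noncomputable def eulerDerivation (ι R : Type*) [CommRing R] :
    Derivation R (MvPolynomial ι R) (MvPolynomial ι R) :=
  mkDerivation R X

@[simp]
theorem eulerDerivation_X {ι : Type*} (i : ι) : eulerDerivation ι R (X i) = X i :=
  mkDerivation_X ..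

theorem commutator_eulerDerivation_pderiv {ι : Type*} (i : ι) :
    ⁅eulerDerivation ι R, (pderiv i : Derivation R (MvPolynomial ι R) _)⁆ = -pderiv i := by
  classical
  refine derivation_ext fun j => ?_
  rcases eq_or_ne j i with rfl | hji <;> simp [Derivation.commutator_apply, *]

theorem derivWronskian_eulerDerivation {ι : Type*} [Fintype ι] (a b : MvPolynomial ι R) :
    derivWronskian (eulerDerivation ι R) a b = ∑ i, X i * derivWronskian (pderiv i) a b := by
  simpa [mul_comm] using derivWronskian_map_eq_sum_pderiv (eulerDerivation ι R) (AlgHom.id R _) a b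

theorem eulerDerivation_derivWronskian_pderiv {ι : Type*} {a b : MvPolynomial ι R}
    (hEuler : derivWronskian (eulerDerivation ι R) a b = 0) (i : ι) :
    b * eulerDerivation ι R (derivWronskian (pderiv i) a b)
      - 2 * derivWronskian (pderiv i) a b * eulerDerivation ι R b =
        -(b * derivWronskian (pderiv i) a b) := by
  rw [derivWronskian_commutator, commutator_eulerDerivation_pderiv, hEuler]
  simp only [derivWronskian, Derivation.neg_apply, map_zero]
  ring

theorem linearPart_invariantHom (A c σ : R) (b : MvPolynomial (Fin 2) R) :
    linearPart c σ (invariantHom A b) =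
      invariantHom A (-2 * (C σ * X 0 * pderiv 0 b + X 1 * pderiv 1 b))
        + invariantHom A (2 * C A * C (σ - 1) * pderiv 0 b) * X 1 ^ 2
        + X 0 * X 2 * invariantHom A (2 * C c * pderiv 0 b) := by
  rw [derivation_map_eq_sum_pderiv, Fin.sum_univ_two]
  simp only [invariantHom_X, invariantHom_C, Matrix.cons_val, map_add, map_sub, map_mul, map_neg,
    map_ofNat, map_one, Derivation.leibniz, Derivation.leibniz_pow, derivation_C, linearPart_X,
    smul_eq_mul, nsmul_eq_mul, Nat.cast_ofNat]
  ring

theorem linearPart_one_invariantHom (A c : R) (b : MvPolynomial (Fin 2) R) :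
    linearPart c 1 (invariantHom A b) = invariantHom A (-2 * eulerDerivation (Fin 2) R b)
      + X 0 * X 2 * invariantHom A (2 * C c * pderiv 0 b) := by
  have hE := derivation_map_eq_sum_pderiv (eulerDerivation (Fin 2) R) (AlgHom.id R _) b
  rw [linearPart_invariantHom]
  simp_all [mul_comm]

theorem derivWronskian_linearPart_invariantHom (A c σ : R) (a b : MvPolynomial (Fin 2) R) :
    derivWronskian (linearPart c σ) (invariantHom A a) (invariantHom A b) =
      invariantHom A (-2 * (C σ * X 0 * derivWronskian (pderiv 0) a b
        + X 1 * derivWronskian (pderiv 1) a b))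
        + invariantHom A (2 * C A * C (σ - 1) * derivWronskian (pderiv 0) a b) * X 1 ^ 2
        + X 0 * X 2 * invariantHom A (2 * C c * derivWronskian (pderiv 0) a b) := by
  simp only [derivWronskian, linearPart_invariantHom, map_sub, map_add, map_mul, map_neg]
  ring

theorem derivWronskian_constantPart_invariantHom (A r : R) (a b : MvPolynomial (Fin 2) R) :
    derivWronskian (constantPart r) (invariantHom A a) (invariantHom A b) =
      invariantHom A (2 * C r * (C A * derivWronskian (pderiv 0) a b
        + derivWronskian (pderiv 1) a b)) * X 1 := by
  rw [derivWronskian_map_eq_sum_pderiv, Fin.sum_univ_two]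
  simp only [invariantHom_X, invariantHom_C, Matrix.cons_val, map_add, map_mul, map_ofNat,
    Derivation.leibniz, Derivation.leibniz_pow, derivation_C, constantPart_X, smul_eq_mul,
    nsmul_eq_mul, Nat.cast_ofNat]
  ring

end LowerOrderParts

section Obstructions

variable {R : Type*} [CommRing R] [IsDomain R] [CharZero R] {A c σ r : R}
  {a b : MvPolynomial (Fin 2) R} {E F : MvPolynomial (Fin 3) R}

theorem derivWronskian_pderiv_relations_of_first_order (hA : A ≠ 0)
    (hE : quadraticPart A E =
      -derivWronskian (linearPart c σ) (invariantHom A a) (invariantHom A b)) :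
    C σ * X 0 * derivWronskian (pderiv 0) a b + X 1 * derivWronskian (pderiv 1) a b = 0 ∧
      C (σ - 1) * derivWronskian (pderiv 0) a b = 0 := by
  rw [derivWronskian_linearPart_invariantHom] at hE
  obtain ⟨h₀, -, h₂⟩ := eq_zero_of_quadraticPart_eq hA (F := E)
    (e₀ := 2 * (C σ * X 0 * derivWronskian (pderiv 0) a b + X 1 * derivWronskian (pderiv 1) a b))
    (e₁ := 0) (e₂ := -(2 * C A * C (σ - 1) * derivWronskian (pderiv 0) a b))
    (H := Polynomial.C (-(2 * C c * derivWronskian (pderiv 0) a b))) (by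
      simp only [hE, evenHom_C, map_neg, map_mul, map_zero]
      ring)
  exact ⟨by simpa using h₀, by simpa [hA, mul_assoc] using h₂⟩

theorem exists_eq_of_quadraticPart_eq_neg_derivWronskian (hA : A ≠ 0)
    (hEuler : derivWronskian (eulerDerivation (Fin 2) R) a b = 0)
    (hE : quadraticPart A E =
      -derivWronskian (linearPart c 1) (invariantHom A a) (invariantHom A b)) :
    ∃ G, E =
      (2 * c) • (invariantHom A (derivWronskian (pderiv 0) a b) * X 1) + invariantHom A G := by
  rw [derivWronskian_eulerDerivation, Fin.sum_univ_two] at hEuler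
  obtain ⟨G, hG⟩ := exists_eq_invariantHom_of_quadraticPart_eq_zero hA
    (f := E - (2 * c) • (invariantHom A (derivWronskian (pderiv 0) a b) * X 1)) (by
      rw [map_sub, hE, derivWronskian_linearPart_invariantHom, C_1, one_mul, hEuler,
        Derivation.map_smul, Derivation.leibniz, quadraticPart_invariantHom]
      simp only [smul_eq_C_mul, smul_eq_mul, sub_self, map_mul, map_neg, map_zero, map_ofNat,
        invariantHom_C, quadraticPart_X, Matrix.cons_val]
      ring)
  exact ⟨G, by rw [← hG]; ring⟩

theorem derivWronskian_pderiv_relation_of_second_order (hA : A ≠ 0) (hb : b ≠ 0)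
    (hEuler : derivWronskian (eulerDerivation (Fin 2) R) a b = 0)
    (hE : quadraticPart A E =
      -derivWronskian (linearPart c 1) (invariantHom A a) (invariantHom A b))
    (hF : quadraticPart A F =
      -(invariantHom A b * linearPart c 1 E - 2 * E * linearPart c 1 (invariantHom A b)
        + invariantHom A b
          * derivWronskian (constantPart r) (invariantHom A a) (invariantHom A b))) :
    C (c + r * A) * derivWronskian (pderiv 0) a b + C r * derivWronskian (pderiv 1) a b = 0 := by
  obtain ⟨G, rfl⟩ := exists_eq_of_quadraticPart_eq_neg_derivWronskian hA hEuler hE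
  have hcomm := eulerDerivation_derivWronskian_pderiv hEuler 0
  have hlin := linearPart_one_invariantHom A c
  rw [derivWronskian_constantPart_invariantHom] at hF
  generalize eulerDerivation (Fin 2) R = θ at hcomm hlin
  generalize derivWronskian (pderiv 0) a b = du at hcomm hF ⊢
  generalize derivWronskian (pderiv 1) a b = dv at hF ⊢
  simp only [map_add, Derivation.map_smul, Derivation.leibniz, smul_eq_mul, hlin, linearPart_X,
    Matrix.cons_val] at hF
  obtain ⟨-, h₁, -⟩ := eq_zero_of_quadraticPart_eq hA (F := F)
    (e₀ := 2 * (b * θ G) - 4 * (G * θ b))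
    (e₁ := 2 * C c * (b * du) + 4 * C c * (b * θ du - 2 * du * θ b)
      - b * (2 * C r * (C A * du + dv))) (e₂ := 0)
    (H := Polynomial.C (2 * G * (2 * C c * pderiv 0 b) - b * (2 * C c * pderiv 0 G))
      + Polynomial.C (4 * C c * C c * (2 * du * pderiv 0 b - b * pderiv 0 du))
        * Polynomial.X) (by
      simp only [hF, smul_eq_C_mul, evenHom_C, evenHom_X, map_add, map_mul, map_sub, map_neg,
        map_ofNat, map_zero, invariantHom_C]
      ring)
  rw [hcomm] at h₁
  have h₂ : -2 * b * (C (c + r * A) * du + C r * dv) = 0 := by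
    rw [C_add, C_mul]
    linear_combination h₁
  simpa [hb] using h₂

theorem derivWronskian_pderiv_eq_zero_of_quotient_equations (hA : A ≠ 0)
    (h : σ ≠ 1 ∨ c ≠ 0 ∨ r ≠ 0) (hb : b ≠ 0)
    (hE : quadraticPart A E =
      -derivWronskian (linearPart c σ) (invariantHom A a) (invariantHom A b))
    (hF : quadraticPart A F =
      -(invariantHom A b * linearPart c σ E - 2 * E * linearPart c σ (invariantHom A b)
        + invariantHom A b
          * derivWronskian (constantPart r) (invariantHom A a) (invariantHom A b)))
    (i : Fin 2) : derivWronskian (pderiv i) a b = 0 := by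
  obtain ⟨h₀, h₂⟩ := derivWronskian_pderiv_relations_of_first_order hA hE
  suffices hdu : derivWronskian (pderiv 0) a b = 0 by
    fin_cases i
    · exact hdu
    · simpa [hdu] using h₀
  rcases eq_or_ne σ 1 with rfl | hσ
  · rw [C_1, one_mul] at h₀
    have hEuler : derivWronskian (eulerDerivation (Fin 2) R) a b = 0 := by
      rw [derivWronskian_eulerDerivation, Fin.sum_univ_two, h₀]
    have hsecond := derivWronskian_pderiv_relation_of_second_order hA hb hEuler hE hF
    have hdet : (C (c + r * A) * X 1 - C r * X 0) * derivWronskian (pderiv 0) a b = 0 := by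
      linear_combination X 1 * hsecond - C r * h₀
    refine (mul_eq_zero.mp hdet).resolve_left fun h0 => ?_
    have hr : r = 0 := by simpa using congrArg (eval ![1, 0]) h0
    have hc : c = 0 := by simpa [hr] using congrArg (eval ![0, 1]) h0
    simp [hc, hr] at h
  · exact (mul_eq_zero.mp h₂).resolve_left (C_ne_zero.mpr (sub_ne_zero.mpr hσ))

end Obstructions

section Multiplier

variable {R : Type*} [CommRing R]

theorem quadraticPart_signFlip (A : R) (i : Fin 3) (f : MvPolynomial (Fin 3) R) :
    quadraticPart A (signFlip i f) = -signFlip i (quadraticPart A f) := by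
  have hX (j : Fin 3) :
      quadraticPart A (signFlip i (X j)) = -1 * signFlip i (quadraticPart A (X j)) := by
    fin_cases i <;> fin_cases j <;> simp
  rw [derivation_comp_eq_mul_comp hX, neg_one_mul]

theorem sum_signFlip_eq_self {L : MvPolynomial (Fin 3) R} (hL : L.IsHomogeneous 1) :
    ∑ i, signFlip i L = L := by
  rw [← mem_homogeneousSubmodule, homogeneousSubmodule_one_eq_span_X] at hL
  induction hL using Submodule.span_induction with
  | mem x hx =>
    obtain ⟨j, rfl⟩ := hx
    fin_cases j <;> simp [Fin.sum_univ_three]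
  | zero => simp
  | add x y _ _ hx hy => simp only [map_add, Finset.sum_add_distrib, hx, hy]
  | smul t x _ hx => simp only [map_smul, ← Finset.smul_sum, hx]

theorem exists_quadraticPart_eq_neg_mul [IsDomain R] {A : R} {K₁ g : MvPolynomial (Fin 3) R}
    (hK : K₁.IsHomogeneous 1) (hg : g ≠ 0) (h : quadraticPart A g = K₁ * g) :
    ∃ Q ≠ 0, quadraticPart A Q = -K₁ * Q := by
  refine ⟨∏ i, signFlip i g, Finset.prod_ne_zero_iff.mpr fun i _ => signFlip_ne_zero i hg, ?_⟩
  have hsum := sum_signFlip_eq_self hK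
  rw [Fin.sum_univ_three] at hsum
  simp only [Fin.prod_univ_three, Derivation.leibniz, quadraticPart_signFlip, h, map_mul,
    smul_eq_mul]
  linear_combination -(signFlip 0 g * signFlip 1 g * signFlip 2 g) * hsum

end Multiplier

section Jets

variable {R S : Type*} [CommRing R] [CommRing S] [Algebra R S]

/-- The polynomial `f₀ + f₁ ε + f₂ ε²` satisfies
`(D₂ + D₁ ε + D₀ ε²) f = (K₁ + K₀ ε) f` modulo `ε³`. The three highest homogeneous parts of a
Darboux polynomial satisfy these equations, `K₁ + K₀` being its cofactor. -/
structure IsDarbouxJet (D₂ D₁ D₀ : Derivation R S S) (K₁ K₀ f₀ f₁ f₂ : S) : Prop where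
  order_zero : D₂ f₀ = K₁ * f₀
  order_one : D₂ f₁ + D₁ f₀ = K₁ * f₁ + K₀ * f₀
  order_two : D₂ f₂ + D₁ f₁ + D₀ f₀ = K₁ * f₂ + K₀ * f₁

-- `E` and `F` are the coefficients of `ε` and `ε²` in the quotient of the two jets, with
-- denominators cleared by powers of `Q * g₀`.
theorem IsDarbouxJet.exists_quotient_equations {D₂ D₁ D₀ : Derivation R S S}
    {K₁ K₀ f₀ f₁ f₂ g₀ g₁ g₂ Q : S} (hf : IsDarbouxJet D₂ D₁ D₀ K₁ K₀ f₀ f₁ f₂)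
    (hg : IsDarbouxJet D₂ D₁ D₀ K₁ K₀ g₀ g₁ g₂) (hQ : D₂ Q = -K₁ * Q) :
    ∃ E F, D₂ E = -derivWronskian D₁ (Q * f₀) (Q * g₀) ∧
      D₂ F = -(Q * g₀ * D₁ E - 2 * E * D₁ (Q * g₀)
        + Q * g₀ * derivWronskian D₀ (Q * f₀) (Q * g₀)) := by
  refine ⟨Q ^ 2 * (f₁ * g₀ - f₀ * g₁),
    Q ^ 3 * (f₂ * g₀ ^ 2 - f₁ * g₁ * g₀ - f₀ * g₂ * g₀ + f₀ * g₁ ^ 2), ?_, ?_⟩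
  · simp only [derivWronskian, Derivation.leibniz, Derivation.leibniz_pow, map_sub, smul_eq_mul,
      nsmul_eq_mul, Nat.cast_ofNat]
    linear_combination (2 * Q * (f₁ * g₀ - f₀ * g₁)) * hQ + Q ^ 2 * g₀ * hf.order_one
      - Q ^ 2 * g₁ * hf.order_zero - Q ^ 2 * f₀ * hg.order_one + Q ^ 2 * f₁ * hg.order_zero
  · simp only [derivWronskian, Derivation.leibniz, Derivation.leibniz_pow, map_sub, map_add,
      smul_eq_mul, nsmul_eq_mul, Nat.cast_ofNat]
    linear_combination
      (3 * Q ^ 2 * (f₂ * g₀ ^ 2 - f₁ * g₁ * g₀ - f₀ * g₂ * g₀ + f₀ * g₁ ^ 2)) * hQ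
      + Q ^ 3 * g₀ ^ 2 * hf.order_two - Q ^ 3 * g₁ * g₀ * hf.order_one
      + Q ^ 3 * (2 * f₀ * g₁ - f₁ * g₀) * hg.order_one - Q ^ 3 * f₀ * g₀ * hg.order_two
      + Q ^ 3 * (g₁ ^ 2 - g₂ * g₀) * hf.order_zero
      + Q ^ 3 * (2 * f₂ * g₀ - f₁ * g₁ - f₀ * g₂) * hg.order_zero

theorem isDarbouxJet_homogeneousPart {ι : Type*}
    {D₂ D₁ D₀ : Derivation R (MvPolynomial ι R) (MvPolynomial ι R)} {K₁ K₀ f : MvPolynomial ι R}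
    (hD₂ : ∀ i, (D₂ (X i)).IsHomogeneous 2) (hD₁ : ∀ i, (D₁ (X i)).IsHomogeneous 1)
    (hD₀ : ∀ i, (D₀ (X i)).IsHomogeneous 0) (hK₁ : K₁.IsHomogeneous 1) (hK₀ : K₀.IsHomogeneous 0)
    (h : (D₂ + D₁ + D₀) f = (K₁ + K₀) * f) {n : ℤ} (hn : f.totalDegree ≤ n) :
    IsDarbouxJet D₂ D₁ D₀ K₁ K₀ (homogeneousPart n f) (homogeneousPart (n - 1) f)
      (homogeneousPart (n - 2) f) := by
  have hpart (j : ℤ) : D₂ (homogeneousPart (j - 1) f) + D₁ (homogeneousPart j f)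
      + D₀ (homogeneousPart (j + 1) f)
      = K₁ * homogeneousPart (j - 1) f + K₀ * homogeneousPart j f := by
    have hj := congrArg (homogeneousPart j) h
    simp only [Derivation.add_apply, add_mul, map_add, homogeneousPart_derivation hD₂,
      homogeneousPart_derivation hD₁, homogeneousPart_derivation hD₀, homogeneousPart_mul hK₁,
      homogeneousPart_mul hK₀, Nat.cast_ofNat, Nat.cast_one, Nat.cast_zero, add_sub_cancel_right,
      sub_zero] at hj
    rwa [show j + 1 - 2 = j - 1 by ring] at hj
  have htop {j : ℤ} (hj : n < j) : homogeneousPart j f = 0 := homogeneousPart_eq_zero (by lia)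
  constructor
  · simpa [htop, add_assoc] using hpart (n + 1)
  · simpa [htop] using hpart n
  · have := hpart (n - 1)
    rw [sub_add_cancel, sub_sub, one_add_one_eq_two] at this
    exact this

theorem exists_cofactor_eq_add [IsDomain R] {ι : Type*}
    {D₂ D₁ D₀ : Derivation R (MvPolynomial ι R) (MvPolynomial ι R)} {K g : MvPolynomial ι R}
    (hD₂ : ∀ i, (D₂ (X i)).IsHomogeneous 2) (hD₁ : ∀ i, (D₁ (X i)).IsHomogeneous 1)
    (hD₀ : ∀ i, (D₀ (X i)).IsHomogeneous 0) (hg : g ≠ 0) (h : (D₂ + D₁ + D₀) g = K * g) :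
    ∃ K₁ K₀, K₁.IsHomogeneous 1 ∧ K₀.IsHomogeneous 0 ∧ K = K₁ + K₀ := by
  have hdeg : K.totalDegree ≤ 1 := by
    by_contra! hlt
    have hK : K ≠ 0 := by rintro rfl; simp at hlt
    apply homogeneousPart_totalDegree_ne_zero (mul_ne_zero hK hg)
    have hzero {j : ℤ} (hj : g.totalDegree < j) : homogeneousPart j g = 0 :=
      homogeneousPart_eq_zero hj
    rw [totalDegree_mul_of_isDomain hK hg, ← h, Derivation.add_apply, Derivation.add_apply, map_add,
      map_add, homogeneousPart_derivation hD₂, homogeneousPart_derivation hD₁,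
      homogeneousPart_derivation hD₀, hzero (by lia), hzero (by lia), hzero (by lia)]
    simp only [map_zero, add_zero]
  refine ⟨homogeneousComponent 1 K, homogeneousComponent 0 K,
    homogeneousComponent_isHomogeneous 1 K, homogeneousComponent_isHomogeneous 0 K, ?_⟩
  have hsum : ∑ i ∈ Finset.range 2, homogeneousComponent i K = K := by
    rw [← Finset.sum_subset (Finset.range_mono (by lia : K.totalDegree + 1 ≤ 2)),
      sum_homogeneousComponent]
    exact fun i _ hi => homogeneousComponent_eq_zero i K (by simpa using hi)
  simpa [Finset.sum_range_succ, add_comm] using hsum.symm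

end Jets

section Proportionality

variable {R : Type*} [CommRing R]

/-- The derivation of the Glukhovsky–Dolzhansky system with parameters `A`, `c`, `σ`, `r` over an
arbitrary coefficient ring. -/
noncomputable def gdDerivation (A c σ r : R) :
    Derivation R (MvPolynomial (Fin 3) R) (MvPolynomial (Fin 3) R) :=
  quadraticPart A + linearPart c σ + constantPart r

theorem gdDeriv_eq_gdDerivation (A c σ r : ℝ) (f : MvPolynomial (Fin 3) ℝ) :
    gdDeriv A c σ r f = gdDerivation A c σ r f := by
  have h : gdDerivation A c σ r f = ∑ i, pderiv i f * gdDerivation A c σ r (X i) :=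
    derivation_map_eq_sum_pderiv _ (AlgHom.id ℝ _) f
  rw [h, Fin.sum_univ_three]
  simp only [gdDeriv, gdDerivation, Derivation.add_apply, quadraticPart_X, linearPart_X,
    constantPart_X, Matrix.cons_val]
  ring

theorem isHomogeneous_quadraticPart_X (A : R) (i : Fin 3) :
    (quadraticPart A (X i)).IsHomogeneous 2 := by
  have hXX (j k : Fin 3) : (X j * X k : MvPolynomial (Fin 3) R).IsHomogeneous 2 :=
    (isHomogeneous_X R j).mul (isHomogeneous_X R k)
  fin_cases i
  · simpa [mul_assoc] using (hXX 1 2).C_mul A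
  · simpa using (hXX 0 2).neg
  · simpa using hXX 0 1

theorem isHomogeneous_linearPart_X (c σ : R) (i : Fin 3) :
    (linearPart c σ (X i)).IsHomogeneous 1 := by
  fin_cases i
  · simpa using ((isHomogeneous_X R 2).C_mul c).sub ((isHomogeneous_X R 0).C_mul σ)
  · simpa using (isHomogeneous_X R 1).neg
  · simpa using (isHomogeneous_X R 2).neg

theorem isHomogeneous_constantPart_X (r : R) (i : Fin 3) :
    (constantPart r (X i)).IsHomogeneous 0 := by
  fin_cases i
  · simpa using isHomogeneous_zero (Fin 3) R 0
  · simpa using isHomogeneous_C (Fin 3) r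
  · simpa using isHomogeneous_zero (Fin 3) R 0

variable {k : Type*} [Field k] [CharZero k] {A c σ r : k} {K f g : MvPolynomial (Fin 3) k}

theorem IsDarbouxJet.exists_eq_C_mul {K₁ K₀ f₀ f₁ f₂ g₀ g₁ g₂ : MvPolynomial (Fin 3) k}
    (hA : A ≠ 0) (h : σ ≠ 1 ∨ c ≠ 0 ∨ r ≠ 0) (hK₁ : K₁.IsHomogeneous 1) (hg₀ : g₀ ≠ 0)
    (hf : IsDarbouxJet (quadraticPart A) (linearPart c σ) (constantPart r) K₁ K₀ f₀ f₁ f₂)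
    (hg : IsDarbouxJet (quadraticPart A) (linearPart c σ) (constantPart r) K₁ K₀ g₀ g₁ g₂) :
    ∃ t, f₀ = C t * g₀ := by
  obtain ⟨Q, hQ0, hQ⟩ := exists_quadraticPart_eq_neg_mul hK₁ hg₀ hg.order_zero
  have hker {p : MvPolynomial (Fin 3) k} (hp : quadraticPart A p = K₁ * p) :
      quadraticPart A (Q * p) = 0 := by
    rw [Derivation.leibniz, hp, hQ, smul_eq_mul, smul_eq_mul]
    ring
  obtain ⟨a, ha⟩ := exists_eq_invariantHom_of_quadraticPart_eq_zero hA (hker hf.order_zero)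
  obtain ⟨b, hb⟩ := exists_eq_invariantHom_of_quadraticPart_eq_zero hA (hker hg.order_zero)
  have hb0 : b ≠ 0 := by
    rintro rfl
    exact mul_ne_zero hQ0 hg₀ (by rw [hb, map_zero])
  obtain ⟨E, F, hE, hF⟩ := hf.exists_quotient_equations hg hQ
  rw [ha, hb] at hE hF
  obtain ⟨t, rfl⟩ := exists_eq_C_mul_of_derivWronskian_pderiv_eq_zero hb0
    (derivWronskian_pderiv_eq_zero_of_quotient_equations hA h hb0 hE hF)
  refine ⟨t, mul_left_cancel₀ hQ0 ?_⟩
  rw [ha, map_mul, invariantHom_C, ← hb, mul_left_comm]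

theorem exists_homogeneousPart_eq_C_mul (hA : A ≠ 0) (h : σ ≠ 1 ∨ c ≠ 0 ∨ r ≠ 0) (hg : g ≠ 0)
    (hKf : gdDerivation A c σ r f = K * f) (hKg : gdDerivation A c σ r g = K * g) :
    ∃ t, homogeneousPart f.totalDegree f = C t * homogeneousPart g.totalDegree g := by
  have hD₂ := isHomogeneous_quadraticPart_X A
  have hD₁ := isHomogeneous_linearPart_X c σ
  have hD₀ := isHomogeneous_constantPart_X r
  obtain ⟨K₁, K₀, hK₁, hK₀, rfl⟩ := exists_cofactor_eq_add hD₂ hD₁ hD₀ hg hKg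
  exact IsDarbouxJet.exists_eq_C_mul hA h hK₁ (homogeneousPart_totalDegree_ne_zero hg)
    (isDarbouxJet_homogeneousPart hD₂ hD₁ hD₀ hK₁ hK₀ hKf le_rfl)
    (isDarbouxJet_homogeneousPart hD₂ hD₁ hD₀ hK₁ hK₀ hKg le_rfl)

theorem exists_eq_C_mul_of_gdDerivation_eq_mul (hA : A ≠ 0) (h : σ ≠ 1 ∨ c ≠ 0 ∨ r ≠ 0)
    (hg : g ≠ 0) (hKf : gdDerivation A c σ r f = K * f) (hKg : gdDerivation A c σ r g = K * g) :
    ∃ t, f = C t * g := by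
  have hdeg {p : MvPolynomial (Fin 3) k} (hp : p ≠ 0) (hKp : gdDerivation A c σ r p = K * p) :
      (p.totalDegree : ℤ) = g.totalDegree := by
    obtain ⟨t, ht⟩ := exists_homogeneousPart_eq_C_mul hA h hg hKp hKg
    exact eq_of_homogeneousPart_eq_C_mul (homogeneousPart_totalDegree_ne_zero hp) ht
  rcases eq_or_ne f 0 with rfl | hf
  · exact ⟨0, by simp⟩
  obtain ⟨t, ht⟩ := exists_homogeneousPart_eq_C_mul hA h hg hKf hKg
  refine ⟨t, ?_⟩
  by_contra hne
  have hd := sub_ne_zero.mpr hne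
  have hKd : gdDerivation A c σ r (f - C t * g) = K * (f - C t * g) := by
    rw [map_sub, Derivation.leibniz, derivation_C, hKf, hKg, smul_zero, add_zero, smul_eq_mul]
    ring
  apply homogeneousPart_totalDegree_ne_zero hd
  rw [hdeg hd hKd, map_sub, C_mul', map_smul, ← C_mul', ← ht, hdeg hf hKf, sub_self]

end Proportionality

end GlukhovskyDolzhansky

-- If `σ = 1` and `c = r = 0`, then `(x² + A y²) / (y² + z²)` is a first integral.
open GlukhovskyDolzhansky in
theorem gd_no_rational_first_integral_general {k : Type*} [Field k] [CharZero k] {A c σ r : k}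
    (hA : A ≠ 0) (h : σ ≠ 1 ∨ c ≠ 0 ∨ r ≠ 0) {f g : MvPolynomial (Fin 3) k} (hg : g ≠ 0)
    (hfi : gdDerivation A c σ r f * g = f * gdDerivation A c σ r g) : ∃ t, f = C t * g := by
  obtain ⟨f', g', d, hrel, rfl, rfl⟩ := UniqueFactorizationMonoid.exists_reduced_factors' f g hg
  have hd := left_ne_zero_of_mul hg
  have hW : derivWronskian (gdDerivation A c σ r) f' g' = 0 := by
    have hmul := derivWronskian_mul_mul (gdDerivation A c σ r) d f' g'
    rw [derivWronskian, mul_comm (d * g'), sub_eq_zero.mpr hfi] at hmul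
    simpa [hd] using hmul.symm
  obtain ⟨K, hK⟩ := dvd_right_of_derivWronskian_eq_zero hrel hW
  have hg' := right_ne_zero_of_mul hg
  have hKf : gdDerivation A c σ r f' = K * f' := by
    apply mul_left_cancel₀ hg'
    rw [derivWronskian, hK] at hW
    linear_combination hW
  obtain ⟨t, rfl⟩ := exists_eq_C_mul_of_gdDerivation_eq_mul hA h hg' hKf (hK.trans (mul_comm _ _))
  exact ⟨t, mul_left_comm _ _ _⟩

/-- For positive parameters, the Glukhovsky–Dolzhansky system has no
nonconstant rational first integral. -/
theorem gd_no_rational_first_integral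
    (A C σ Ra : ℝ) (hA : 0 < A) (hC : 0 < C) (hσ : 0 < σ) (hRa : 0 < Ra)
    (f g : MvPolynomial (Fin 3) ℝ) (hf : f ≠ 0) (hg : g ≠ 0)
    (hcop : IsRelPrime f g)
    (hfi : gdDeriv A C σ Ra f * g = f * gdDeriv A C σ Ra g) :
    (∃ c : ℝ, f = MvPolynomial.C c) ∧ (∃ c : ℝ, g = MvPolynomial.C c) := by
  simp only [GlukhovskyDolzhansky.gdDeriv_eq_gdDerivation] at hfi
  obtain ⟨t, rfl⟩ :=
    gd_no_rational_first_integral_general hA.ne' (.inr (.inl hC.ne')) hg hfi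
  obtain ⟨s, -, rfl⟩ := isUnit_iff_eq_C_of_isReduced.mp (hcop (dvd_mul_left g _) dvd_rfl)
  exact ⟨⟨t * s, C_mul.symm⟩, ⟨s, rfl⟩⟩
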